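/- arXiv:2112.08993 — 2 statements merged into one kernel-verified Lean document; each statement's English description precedes it below -/
import Mathlib

section
/- Let g : [0,∞) → [0,∞) be a decreasing (antitone) right-continuous function with lim_{s→∞} g(s) = 0. Assume there exist constants τ > 1 and B > 0 such that for all s, t > 0 one has t·g(s+t) ≤ B·(g(s))^τ. Then g(s) = 0 for every s ≥ s_∞, where s_∞ := e·B·(g(0))^{τ−1} / (1 − e^{1−τ}) and e is Euler's number. -/
/-!
Write `S` for the threshold `s_∞` and `q = e ^ (1 - τ) < 1`, so that `S * (1 - q) = e * B * g 0 ^ (τ - 1)`.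
Along the increasing sequence `s_n = S * (1 - q ^ n)`, which starts at `0` and stays below `S`, the
function `g` drops by a factor of at least `e` at each step: the increment is `S * (1 - q) * q ^ n`, and
it is chosen so that the iteration inequality turns `g s_n ≤ e ^ (-n) * g 0` into
`g s_{n+1} ≤ e ^ (-(n+1)) * g 0`. By monotonicity `g S ≤ e ^ (-n) * g 0` for every `n`, hence `g S = 0`.
Right-continuity extends the iteration inequality to `s = 0`, where the sequence starts.
-/

open Filter Topology

/-- The iteration inequality also holds at `s = 0`: by monotonicity `t * g (ε + t) ≤ B * g 0 ^ τ` for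
`ε > 0`, and right-continuity of `g` at `t` lets `ε` tend to `0`. -/
lemma iteration_from_zero
    (g : ℝ → ℝ) (τ B : ℝ)
    (hg_nonneg : ∀ s : ℝ, 0 ≤ s → 0 ≤ g s)
    (hg_anti : ∀ s s' : ℝ, 0 ≤ s → s ≤ s' → g s' ≤ g s)
    (hg_rightCont : ∀ s : ℝ, 0 ≤ s → Tendsto g (𝓝[>] s) (𝓝 (g s)))
    (hτ : 1 < τ) (hB : 0 < B)
    (hiter : ∀ s t : ℝ, 0 < s → 0 < t → t * g (s + t) ≤ B * g s ^ τ)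
    (s t : ℝ) (hs : 0 ≤ s) (ht : 0 < t) : t * g (s + t) ≤ B * g s ^ τ := by
  rcases hs.eq_or_lt with rfl | hs
  · rw [zero_add]
    refine le_of_tendsto ((hg_rightCont t ht.le).const_mul t) ?_
    filter_upwards [self_mem_nhdsWithin] with u hu
    have hu' : 0 < u - t := sub_pos.2 hu
    have h := hiter (u - t) t hu' ht
    rw [sub_add_cancel] at h
    refine h.trans (mul_le_mul_of_nonneg_left ?_ hB.le)
    exact Real.rpow_le_rpow (hg_nonneg _ hu'.le) (hg_anti 0 _ le_rfl hu'.le) (by linarith)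
  · exact hiter s t hs ht

/-- The geometric decay of `g` along the sequence `S * (1 - e ^ (n * (1 - τ)))`. -/
lemma decay_along_sequence
    (g : ℝ → ℝ) (τ B S : ℝ)
    (hg_nonneg : ∀ s : ℝ, 0 ≤ s → 0 ≤ g s)
    (hτ : 1 < τ) (hB : 0 < B) (h0 : 0 < g 0)
    (hiter : ∀ s t : ℝ, 0 ≤ s → 0 < t → t * g (s + t) ≤ B * g s ^ τ)
    (hS : S * (1 - Real.exp (1 - τ)) = Real.exp 1 * B * g 0 ^ (τ - 1)) (hS0 : 0 ≤ S) (n : ℕ) :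
    g (S * (1 - Real.exp (n * (1 - τ)))) ≤ Real.exp (-n) * g 0 := by
  induction n with
  | zero => simp
  | succ n ih =>
    set s := S * (1 - Real.exp (n * (1 - τ))) with hs
    set t := Real.exp 1 * B * g 0 ^ (τ - 1) * Real.exp (n * (1 - τ)) with ht
    have hstep : S * (1 - Real.exp ((n + 1 : ℕ) * (1 - τ))) = s + t := by
      have hexp : Real.exp ((n + 1 : ℕ) * (1 - τ))
          = Real.exp (n * (1 - τ)) * Real.exp (1 - τ) := by
        rw [← Real.exp_add]; push_cast; ring_nf
      rw [hs, ht, ← hS, hexp]; ring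
    have ht0 : 0 < t := by positivity
    have hs0 : 0 ≤ s := by
      refine mul_nonneg hS0 (sub_nonneg.2 (Real.exp_le_one_iff.2 ?_))
      exact mul_nonpos_of_nonneg_of_nonpos n.cast_nonneg (by linarith)
    have hpow : g s ^ τ ≤ Real.exp (-n * τ) * (g 0 ^ (τ - 1) * g 0) := by
      calc g s ^ τ ≤ (Real.exp (-n) * g 0) ^ τ :=
            Real.rpow_le_rpow (hg_nonneg s hs0) ih (by linarith)
        _ = Real.exp (-n * τ) * (g 0 ^ (τ - 1) * g 0) := by
            rw [Real.mul_rpow (Real.exp_pos _).le h0.le, ← Real.exp_mul,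
              ← Real.rpow_add_one h0.ne', sub_add_cancel]
    rw [hstep]
    refine le_of_mul_le_mul_left ?_ ht0
    calc t * g (s + t) ≤ B * g s ^ τ := hiter s t hs0 ht0
      _ ≤ B * (Real.exp (-n * τ) * (g 0 ^ (τ - 1) * g 0)) :=
          mul_le_mul_of_nonneg_left hpow hB.le
      _ = t * (Real.exp (-(n + 1 : ℕ)) * g 0) := by
          have hexp : Real.exp (-n * τ)
              = Real.exp 1 * Real.exp (n * (1 - τ)) * Real.exp (-(n + 1 : ℕ)) := by
            rw [← Real.exp_add, ← Real.exp_add]; push_cast; ring_nf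
          rw [ht, hexp]; ring

/-- **De Giorgi iteration lemma** (Guedj–Kołodziej–Zeriahi, Lemma 1.5).
Let `g : [0,∞) → [0,∞)` be decreasing, right-continuous, with `g(s) → 0` as `s → ∞`.
If `t * g (s + t) ≤ B * (g s) ^ τ` for all `s, t > 0`, where `τ > 1` and `B > 0`, then
`g s = 0` for all `s ≥ s_∞ := e * B * (g 0) ^ (τ - 1) / (1 - e ^ (1 - τ))`. -/
theorem deGiorgi_iteration_lemma
    (g : ℝ → ℝ) (τ B : ℝ)
    (hg_nonneg : ∀ s : ℝ, 0 ≤ s → 0 ≤ g s)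
    (hg_anti : ∀ s s' : ℝ, 0 ≤ s → s ≤ s' → g s' ≤ g s)
    (hg_rightCont : ∀ s : ℝ, 0 ≤ s → Tendsto g (𝓝[>] s) (𝓝 (g s)))
    (hg_lim : Tendsto g atTop (𝓝 0))
    (hτ : 1 < τ) (hB : 0 < B)
    (hiter : ∀ s t : ℝ, 0 < s → 0 < t → t * g (s + t) ≤ B * g s ^ τ) :
    ∀ s : ℝ, Real.exp 1 * B * g 0 ^ (τ - 1) / (1 - Real.exp (1 - τ)) ≤ s → g s = 0 := by
  intro s hs
  have hq : 0 < 1 - Real.exp (1 - τ) := sub_pos.2 (Real.exp_lt_one_iff.2 (by linarith))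
  have hg0 : 0 ≤ g 0 := hg_nonneg 0 le_rfl
  set S := Real.exp 1 * B * g 0 ^ (τ - 1) / (1 - Real.exp (1 - τ)) with hS
  have hS0 : 0 ≤ S := by positivity
  have hs0 : 0 ≤ s := hS0.trans hs
  refine le_antisymm ?_ (hg_nonneg s hs0)
  rcases hg0.eq_or_lt with h0 | h0
  · exact (hg_anti 0 s le_rfl hs0).trans h0.ge
  have hdecay := decay_along_sequence g τ B S hg_nonneg hτ hB h0
    (iteration_from_zero g τ B hg_nonneg hg_anti hg_rightCont hτ hB hiter)
    (div_mul_cancel₀ _ hq.ne') hS0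
  have hlim : Tendsto (fun n : ℕ => Real.exp (-n) * g 0) atTop (𝓝 0) := by
    simpa using ((Real.tendsto_exp_neg_atTop_nhds_zero.comp
      tendsto_natCast_atTop_atTop).mul_const (g 0))
  refine ge_of_tendsto' hlim fun n => (hg_anti _ s ?_ ?_).trans (hdecay n)
  · refine mul_nonneg hS0 (sub_nonneg.2 (Real.exp_le_one_iff.2 ?_))
    exact mul_nonpos_of_nonneg_of_nonpos n.cast_nonneg (by linarith)
  · exact (mul_le_of_le_one_right hS0 (by linarith [Real.exp_pos (n * (1 - τ))])).trans hs
end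

section
/- Fix an integer N ≥ 1 and a real number β with 0 < β ≤ 1, and let f : ℂ^N → ℝ be the function f(z) = ‖z‖^{2β}. For a twice (real-)differentiable function h : ℂ^N → ℝ, define the complex Hessian form of h at a point z applied to a vector w by H_h(z)(w) := (1/4)·( D²h(z)[w,w] + D²h(z)[i·w, i·w] ), where D²h(z) is the second real Fréchet derivative of h at z (a symmetric real-bilinear form). Then f is twice continuously differentiable away from the origin, and for every z ∈ ℂ^N with z ≠ 0 and every w ∈ ℂ^N one has β²·‖z‖^{2β−2}·‖w‖² ≤ H_f(z)(w) ≤ β·‖z‖^{2β−2}·‖w‖². In particular there exists a constant C_β ≥ 1, depending only on β, such that C_β^{−1}·‖z‖^{−2(1−β)}·‖w‖² ≤ H_f(z)(w) ≤ C_β·‖z‖^{−2(1−β)}·‖w‖² for all z ≠ 0 and all w. -/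
/-!
Everything rests on the Euclidean Hessian of a power of the norm in a real inner product space:
away from the origin, `D(‖x‖^p)(x)[v] = p ‖x‖^(p-2) ⟪x, v⟫` and hence
`D²(‖x‖^p)(z)[w, w] = p ‖z‖^(p-2) ‖w‖² + p (p-2) ‖z‖^(p-4) ⟪z, w⟫²`.

For `p = 2β`, averaging over `w` and `i w` gives the closed formula
`H_f(z)(w) = β ‖z‖^(2β-2) ‖w‖² - β (1-β) ‖z‖^(2β-4) |⟨z, w⟩|²`
with `⟨z, w⟩` the Hermitian product, since `⟪z, w⟫² + ⟪z, i w⟫² = |⟨z, w⟩|²`. As `0 < β ≤ 1`, the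
upper bound comes from dropping the second term and the lower bound from the Cauchy-Schwarz
inequality `|⟨z, w⟩|² ≤ ‖z‖² ‖w‖²`, because `β - β (1-β) = β²`. The constant is `C = β⁻²`.
-/

/-- The complex Hessian form of a (twice real-differentiable) function
`h : ℂ^N → ℝ` at `z` applied to `w`, namely
`(1/4) * (D²h(z)[w,w] + D²h(z)[i•w, i•w])` where `D²h(z)` is the second real
Fréchet derivative of `h` at `z`. -/
noncomputable def complexHessian {N : ℕ} (h : EuclideanSpace ℂ (Fin N) → ℝ)
    (z w : EuclideanSpace ℂ (Fin N)) : ℝ :=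
  (1 / 4) * (fderiv ℝ (fderiv ℝ h) z w w +
    fderiv ℝ (fderiv ℝ h) z (Complex.I • w) (Complex.I • w))

section RealInner

variable {E : Type*} [NormedAddCommGroup E] [InnerProductSpace ℝ E]

/-- Unlike Mathlib's `hasFDerivAt_norm_rpow`, this has no condition on the exponent; the base
point has to be nonzero instead. -/
theorem hasFDerivAt_norm_rpow_of_ne (p : ℝ) {x : E} (hx : x ≠ 0) :
    HasFDerivAt (fun y : E => ‖y‖ ^ p) ((p * ‖x‖ ^ (p - 2)) • innerSL ℝ x) x := by
  have h0 : 0 < ‖x‖ := norm_pos_iff.mpr hx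
  have h := ((hasStrictFDerivAt_norm_sq x).hasFDerivAt).rpow_const (p := p / 2)
    (Or.inl (by positivity))
  have key : ∀ y : E, (‖y‖ ^ 2) ^ (p / 2) = ‖y‖ ^ p := fun y => by
    rw [← Real.rpow_natCast, ← Real.rpow_mul (norm_nonneg y)]
    congr 1
    push_cast
    ring
  have key2 : (‖x‖ ^ 2) ^ (p / 2 - 1) = ‖x‖ ^ (p - 2) := by
    rw [← Real.rpow_natCast, ← Real.rpow_mul (norm_nonneg x)]
    congr 1
    push_cast
    ring
  simp only [key, key2] at h
  convert h using 1
  ext v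
  simp
  ring

theorem contDiffAt_norm_rpow_of_ne (p : ℝ) {n : WithTop ℕ∞} {x : E} (hx : x ≠ 0) :
    ContDiffAt ℝ n (fun y : E => ‖y‖ ^ p) x :=
  (contDiffAt_norm ℝ hx).rpow_const_of_ne (norm_ne_zero_iff.mpr hx)

theorem fderiv_fderiv_norm_rpow (p : ℝ) {z : E} (hz : z ≠ 0) (w : E) :
    fderiv ℝ (fderiv ℝ (fun y : E => ‖y‖ ^ p)) z w w =
      p * ‖z‖ ^ (p - 2) * ‖w‖ ^ 2 + p * (p - 2) * ‖z‖ ^ (p - 4) * inner ℝ z w ^ 2 := by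
  have hd : DifferentiableAt ℝ (fderiv ℝ (fun y : E => ‖y‖ ^ p)) z :=
    ((contDiffAt_norm_rpow_of_ne (n := 2) p hz).fderiv_right (m := 1) (by norm_num)).differentiableAt
      (by norm_num)
  -- The second derivative on `(w, w)` is the derivative along `w` of the scalar function
  -- `x ↦ D(‖x‖^p)(x)[w]`.
  have h1 : HasFDerivAt (fun x => fderiv ℝ (fun y : E => ‖y‖ ^ p) x w)
      ((ContinuousLinearMap.apply ℝ ℝ w).comp (fderiv ℝ (fderiv ℝ (fun y : E => ‖y‖ ^ p)) z)) z :=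
    (ContinuousLinearMap.apply ℝ ℝ w).hasFDerivAt.comp z hd.hasFDerivAt
  have h2 := ((hasFDerivAt_norm_rpow_of_ne (p - 2) hz).const_mul p).mul
    ((hasFDerivAt_id (𝕜 := ℝ) z).inner ℝ (hasFDerivAt_const w z))
  have hev : (fun x => fderiv ℝ (fun y : E => ‖y‖ ^ p) x w) =ᶠ[nhds z]
      fun x => p * ‖x‖ ^ (p - 2) * inner ℝ (id x) w := by
    filter_upwards [isOpen_ne.mem_nhds hz] with x hx
    rw [(hasFDerivAt_norm_rpow_of_ne p hx).fderiv]
    simp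
  have h3 := congrArg (fun L => L w) (h1.unique (h2.congr_of_eventuallyEq hev))
  simp only [ContinuousLinearMap.comp_apply, ContinuousLinearMap.apply_apply] at h3
  rw [h3, show p - 4 = p - 2 - 2 by ring]
  simp [fderivInnerCLM_apply]
  ring

end RealInner

/-- The real inner products of `z` with `w` and `i w` are, up to sign, the real and imaginary parts
of the Hermitian product, so this is the Hermitian Cauchy-Schwarz inequality. -/
theorem inner_sq_add_inner_I_smul_sq_le {N : ℕ} (z w : EuclideanSpace ℂ (Fin N)) :
    inner ℝ z w ^ 2 + inner ℝ z (Complex.I • w) ^ 2 ≤ ‖z‖ ^ 2 * ‖w‖ ^ 2 := by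
  have hre : ∀ v : EuclideanSpace ℂ (Fin N), inner ℝ z v = (inner ℂ z v).re := fun v => by
    simp [PiLp.inner_apply, Complex.inner]
  have hcs : ‖inner ℂ z w‖ ^ 2 ≤ (‖z‖ * ‖w‖) ^ 2 := by
    gcongr
    exact norm_inner_le_norm z w
  rw [hre, hre, inner_smul_right, ← mul_pow]
  refine le_of_eq_of_le ?_ hcs
  rw [Complex.sq_norm, Complex.normSq_apply]
  simp
  ring

theorem complexHessian_norm_rpow {N : ℕ} (β : ℝ) {z : EuclideanSpace ℂ (Fin N)} (hz : z ≠ 0)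
    (w : EuclideanSpace ℂ (Fin N)) :
    complexHessian (fun z => ‖z‖ ^ (2 * β)) z w =
      β * ‖z‖ ^ (2 * β - 2) * ‖w‖ ^ 2 - β * (1 - β) * ‖z‖ ^ (2 * β - 4) *
        (inner ℝ z w ^ 2 + inner ℝ z (Complex.I • w) ^ 2) := by
  rw [complexHessian, fderiv_fderiv_norm_rpow _ hz, fderiv_fderiv_norm_rpow _ hz, norm_smul,
    Complex.norm_I]
  ring

theorem complexHessian_norm_rpow_bounds {N : ℕ} {β : ℝ} (hβ0 : 0 < β) (hβ1 : β ≤ 1)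
    {z : EuclideanSpace ℂ (Fin N)} (hz : z ≠ 0) (w : EuclideanSpace ℂ (Fin N)) :
    β ^ 2 * ‖z‖ ^ (2 * β - 2) * ‖w‖ ^ 2 ≤ complexHessian (fun z => ‖z‖ ^ (2 * β)) z w ∧
      complexHessian (fun z => ‖z‖ ^ (2 * β)) z w ≤ β * ‖z‖ ^ (2 * β - 2) * ‖w‖ ^ 2 := by
  have h0 : 0 < ‖z‖ := norm_pos_iff.mpr hz
  have hb : 0 ≤ 1 - β := by linarith
  have hpow : ‖z‖ ^ (2 * β - 2) = ‖z‖ ^ (2 * β - 4) * ‖z‖ ^ 2 := by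
    rw [← Real.rpow_natCast, ← Real.rpow_add h0]
    congr 1
    push_cast
    ring
  have hc : 0 ≤ β * (1 - β) * ‖z‖ ^ (2 * β - 4) := by positivity
  rw [complexHessian_norm_rpow β hz]
  constructor
  · have := mul_le_mul_of_nonneg_left (inner_sq_add_inner_I_smul_sq_le z w) hc
    rw [hpow]
    linarith
  · have : 0 ≤ β * (1 - β) * ‖z‖ ^ (2 * β - 4) *
        (inner ℝ z w ^ 2 + inner ℝ z (Complex.I • w) ^ 2) := by positivity
    linarith

/-- For `0 < β ≤ 1`, the function `f(z) = ‖z‖^(2β)` on `ℂ^N` is `C²` away from the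
origin, its complex Hessian satisfies
`β² ‖z‖^(2β-2) ‖w‖² ≤ H_f(z)(w) ≤ β ‖z‖^(2β-2) ‖w‖²` for all `z ≠ 0` and all `w`,
and in particular there is a constant `C_β ≥ 1`, depending only on `β`, with
`C_β⁻¹ ‖z‖^(-2(1-β)) ‖w‖² ≤ H_f(z)(w) ≤ C_β ‖z‖^(-2(1-β)) ‖w‖²`. -/
theorem complexHessian_rpow_norm_bounds (N : ℕ) (hN : 1 ≤ N)
    (β : ℝ) (hβ0 : 0 < β) (hβ1 : β ≤ 1) :
    ContDiffOn ℝ 2 (fun z : EuclideanSpace ℂ (Fin N) => ‖z‖ ^ (2 * β))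
      {z : EuclideanSpace ℂ (Fin N) | z ≠ 0} ∧
    (∀ z : EuclideanSpace ℂ (Fin N), z ≠ 0 → ∀ w : EuclideanSpace ℂ (Fin N),
      β ^ 2 * ‖z‖ ^ (2 * β - 2) * ‖w‖ ^ 2 ≤
          complexHessian (fun z => ‖z‖ ^ (2 * β)) z w ∧
        complexHessian (fun z => ‖z‖ ^ (2 * β)) z w ≤
          β * ‖z‖ ^ (2 * β - 2) * ‖w‖ ^ 2) ∧
    ∃ C : ℝ, 1 ≤ C ∧ ∀ z : EuclideanSpace ℂ (Fin N), z ≠ 0 →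
      ∀ w : EuclideanSpace ℂ (Fin N),
      C⁻¹ * ‖z‖ ^ (-(2 * (1 - β))) * ‖w‖ ^ 2 ≤
          complexHessian (fun z => ‖z‖ ^ (2 * β)) z w ∧
        complexHessian (fun z => ‖z‖ ^ (2 * β)) z w ≤
          C * ‖z‖ ^ (-(2 * (1 - β))) * ‖w‖ ^ 2 := by
  refine ⟨fun z hz => (contDiffAt_norm_rpow_of_ne _ hz).contDiffWithinAt,
    fun z hz w => complexHessian_norm_rpow_bounds hβ0 hβ1 hz w, (β ^ 2)⁻¹, ?_, fun z hz w => ?_⟩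
  · exact (one_le_inv₀ (by positivity)).mpr (pow_le_one₀ hβ0.le hβ1)
  · obtain ⟨hl, hu⟩ := complexHessian_norm_rpow_bounds hβ0 hβ1 hz w
    rw [inv_inv, show -(2 * (1 - β)) = 2 * β - 2 by ring]
    refine ⟨hl, hu.trans ?_⟩
    have hC : β ≤ (β ^ 2)⁻¹ :=
      hβ1.trans ((one_le_inv₀ (by positivity)).mpr (pow_le_one₀ hβ0.le hβ1))
    gcongr
end
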